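/- (Solution of the degenerate heat-type equation with time-dependent volatility.) Let T₀ ∈ ℝ and let σ_z : ℝ → ℝ be continuous with σ_z(u) ≠ 0 for all u. For t < T₀ set σ(t)² = ∫_{t}^{T₀} σ_z(u)² du (and σ(t) = √(σ(t)²) > 0). Define, for z > 0 and t < T₀, U(z, t) = 1 + z·N(d̄₁) − N(d̄₂), where d̄₁ = (ln z + σ(t)²/2)/σ(t) and d̄₂ = d̄₁ − σ(t). Then U satisfies ∂U/∂t + (1/2)σ_z(t)² z² ∂²U/∂z² = 0 at every point (z, t) with z > 0 and t < T₀. -/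

import Mathlib

/-- The standard normal cumulative distribution function
`N(x) = (2π)^{-1/2} ∫_{-∞}^{x} e^{-u²/2} du`. -/
noncomputable def stdNormalCDF (x : ℝ) : ℝ :=
  (Real.sqrt (2 * Real.pi))⁻¹ * ∫ u in Set.Iic x, Real.exp (-u ^ 2 / 2)

/-!
With the total variance `v = σ(t)²` as time variable, `U` is `1` plus the Black value
`C(z, v) = z N(d₁) - N(d₁ - √v)`. Let `φ` be the normal density. Since `φ(d₁ - √v) = z φ(d₁)`, the
contributions of the derivative of `d₁` to any derivative of `C` cancel; what remains is
`∂C/∂z = N(d₁)` and `∂C/∂v = z φ(d₁) / (2 √v)`. Differentiating the former once more in `z` gives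
`∂C/∂v = ½ z² ∂²C/∂z²`, and the equation for `U` follows because `dv/dt = -σ_z(t)²`.
-/

open MeasureTheory ProbabilityTheory Set Filter Topology

theorem hasDerivAt_integral_left_of_continuous {E : Type*} [NormedAddCommGroup E]
    [NormedSpace ℝ E] [CompleteSpace E] {f : ℝ → E} (hf : Continuous f) (a b : ℝ) :
    HasDerivAt (fun x ↦ ∫ u in x..b, f u) (-f a) a :=
  intervalIntegral.integral_hasDerivAt_left (hf.intervalIntegrable _ _)
    (hf.stronglyMeasurableAtFilter _ _) hf.continuousAt

theorem hasDerivAt_integral_Iic {E : Type*} [NormedAddCommGroup E] [NormedSpace ℝ E]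
    [CompleteSpace E] {f : ℝ → E} {x : ℝ} (hf : IntegrableOn f (Iic x))
    (hmeas : StronglyMeasurableAtFilter f (𝓝 x)) (hx : ContinuousAt f x) :
    HasDerivAt (fun y ↦ ∫ u in Iic y, f u) (f x) x := by
  obtain ⟨s, hs, hfs⟩ : IntegrableAtFilter f (𝓝 x) :=
    (volume.finiteAt_nhds x).integrableAtFilter_of_tendsto hmeas hx
  obtain ⟨a, b, hxab, hab⟩ := mem_nhds_iff_exists_Ioo_subset.mp hs
  have integrableOn_Iic : ∀ᶠ y in 𝓝 x, IntegrableOn f (Iic y) := by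
    filter_upwards [Ioo_mem_nhds hxab.1 hxab.2] with y hy
    refine (hf.union (hfs.mono_set hab)).mono_set fun u hu ↦ ?_
    exact (le_or_gt u x).imp id fun hxu ↦ ⟨hxab.1.trans hxu, (mem_Iic.mp hu).trans_lt hy.2⟩
  have primitive : HasDerivAt (fun y ↦ (∫ u in Iic x, f u) + ∫ u in x..y, f u) (f x) x :=
    (intervalIntegral.integral_hasDerivAt_right .refl hmeas hx).const_add _
  refine primitive.congr_of_eventuallyEq ?_
  filter_upwards [integrableOn_Iic] with y hy
  rw [← intervalIntegral.integral_Iic_sub_Iic hf hy, add_sub_cancel]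

theorem stdNormalCDF_eq_integral_gaussianPDFReal (x : ℝ) :
    stdNormalCDF x = ∫ u in Iic x, gaussianPDFReal 0 1 u := by
  simp [stdNormalCDF, gaussianPDFReal, integral_const_mul]

theorem hasDerivAt_stdNormalCDF (x : ℝ) :
    HasDerivAt stdNormalCDF (gaussianPDFReal 0 1 x) x := by
  have hcont : Continuous (gaussianPDFReal 0 1) := by
    unfold gaussianPDFReal
    fun_prop
  rw [funext stdNormalCDF_eq_integral_gaussianPDFReal]
  exact hasDerivAt_integral_Iic (integrable_gaussianPDFReal 0 1).integrableOn
    (hcont.stronglyMeasurableAtFilter _ _) hcont.continuousAt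

theorem gaussianPDFReal_apply_sub (μ : ℝ) (v : NNReal) (x s : ℝ) :
    gaussianPDFReal μ v (x - s) =
      Real.exp (((x - μ) * s - s ^ 2 / 2) / v) * gaussianPDFReal μ v x := by
  simp only [gaussianPDFReal, mul_left_comm (Real.exp _), ← Real.exp_add]
  congr 2
  ring

/-- The argument `d₁` of Black's formula for forward price `z`, unit strike and total variance `v`,
the square of the `σ(t)` of the informal statement. -/
noncomputable def blackD₁ (z v : ℝ) : ℝ := (Real.log z + v / 2) / √v

/-- Black's formula: the undiscounted value of a call option with forward price `z`, unit strike and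
total variance `v`. -/
noncomputable def blackCall (z v : ℝ) : ℝ :=
  z * stdNormalCDF (blackD₁ z v) - stdNormalCDF (blackD₁ z v - √v)

section BlackFormula

variable {z v : ℝ}

theorem gaussianPDFReal_blackD₁_sub_sqrt (hz : 0 < z) (hv : 0 < v) :
    gaussianPDFReal 0 1 (blackD₁ z v - √v) = z * gaussianPDFReal 0 1 (blackD₁ z v) := by
  have exponent : blackD₁ z v * √v - √v ^ 2 / 2 = Real.log z := by
    rw [blackD₁, div_mul_cancel₀ _ (Real.sqrt_pos.mpr hv).ne', Real.sq_sqrt hv.le,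
      add_sub_cancel_right]
  rw [gaussianPDFReal_apply_sub, sub_zero, NNReal.coe_one, div_one, exponent, Real.exp_log hz]

theorem hasDerivAt_blackD₁_left (hz : z ≠ 0) (v : ℝ) :
    HasDerivAt (fun w ↦ blackD₁ w v) (z⁻¹ / √v) z :=
  ((Real.hasDerivAt_log hz).add_const _).div_const _

theorem hasDerivAt_blackCall_comp {ζ ν : ℝ → ℝ} {ζ' ν' s : ℝ} (hζ : HasDerivAt ζ ζ' s)
    (hν : HasDerivAt ν ν' s) (hζs : 0 < ζ s) (hνs : 0 < ν s) :
    HasDerivAt (fun r ↦ blackCall (ζ r) (ν r))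
      (ζ' * stdNormalCDF (blackD₁ (ζ s) (ν s)) +
        ν' * (ζ s * gaussianPDFReal 0 1 (blackD₁ (ζ s) (ν s)) / (2 * √(ν s)))) s := by
  have hd₁ : DifferentiableAt ℝ (fun r ↦ blackD₁ (ζ r) (ν r)) s :=
    ((hζ.differentiableAt.log hζs.ne').add (hν.differentiableAt.div_const 2)).div
      (hν.differentiableAt.sqrt hνs.ne') (Real.sqrt_pos.mpr hνs).ne'
  have hd₂ := hd₁.hasDerivAt.fun_sub (hν.sqrt hνs.ne')
  have hcall := (hζ.fun_mul ((hasDerivAt_stdNormalCDF _).comp s hd₁.hasDerivAt)).fun_sub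
    ((hasDerivAt_stdNormalCDF _).comp s hd₂)
  refine hcall.congr_deriv ?_
  rw [gaussianPDFReal_blackD₁_sub_sqrt hζs hνs, Function.comp_apply]
  ring

theorem hasDerivAt_blackCall_left (hz : 0 < z) (hv : 0 < v) :
    HasDerivAt (fun w ↦ blackCall w v) (stdNormalCDF (blackD₁ z v)) z := by
  simpa using hasDerivAt_blackCall_comp (hasDerivAt_id z) (hasDerivAt_const z v) hz hv

theorem deriv_deriv_blackCall_left (hz : 0 < z) (hv : 0 < v) :
    deriv (deriv fun w ↦ blackCall w v) z =
      gaussianPDFReal 0 1 (blackD₁ z v) * (z⁻¹ / √v) := by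
  have delta : deriv (fun w ↦ blackCall w v) =ᶠ[𝓝 z] fun w ↦ stdNormalCDF (blackD₁ w v) := by
    filter_upwards [lt_mem_nhds hz] with w hw using (hasDerivAt_blackCall_left hw hv).deriv
  rw [delta.deriv_eq]
  exact ((hasDerivAt_stdNormalCDF _).comp z (hasDerivAt_blackD₁_left hz.ne' v)).deriv

theorem hasDerivAt_blackCall_variance {ν : ℝ → ℝ} {ν' t : ℝ} (hν : HasDerivAt ν ν' t)
    (hz : 0 < z) (hνt : 0 < ν t) :
    HasDerivAt (fun τ ↦ blackCall z (ν τ))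
      (ν' * (1 / 2 * z ^ 2 * deriv (deriv fun w ↦ blackCall w (ν t)) z)) t := by
  refine (hasDerivAt_blackCall_comp (hasDerivAt_const t z) hν hz hνt).congr_deriv ?_
  rw [deriv_deriv_blackCall_left hz hνt]
  field_simp
  ring

end BlackFormula

theorem time_dependent_vol_solution_general {U : ℝ → ℝ → ℝ} {s2 : ℝ → ℝ} {σ z t : ℝ}
    (hs2 : HasDerivAt s2 (-σ ^ 2) t) (hs2t : 0 < s2 t) (hz : 0 < z)
    (hU : ∀ᶠ p : ℝ × ℝ in 𝓝 (z, t), U p.1 p.2 = 1 + blackCall p.1 (s2 p.2)) :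
    deriv (fun τ ↦ U z τ) t + 1 / 2 * σ ^ 2 * z ^ 2 * deriv (deriv fun w ↦ U w t) z = 0 := by
  have hU_time : (fun τ ↦ U z τ) =ᶠ[𝓝 t] fun τ ↦ 1 + blackCall z (s2 τ) :=
    (Continuous.prodMk_right z).continuousAt.eventually hU
  have hU_space : (fun w ↦ U w t) =ᶠ[𝓝 z] fun w ↦ 1 + blackCall w (s2 t) :=
    (Continuous.prodMk_left t).continuousAt.eventually hU
  rw [hU_time.deriv_eq, hU_space.deriv.deriv_eq, deriv_const_add, deriv_const_add',
    (hasDerivAt_blackCall_variance hs2 hz hs2t).deriv]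
  ring

/-- Solution of the degenerate heat-type equation with time-dependent volatility. -/
theorem time_dependent_vol_solution (T₀ : ℝ)
    (σz : ℝ → ℝ) (hσz : Continuous σz) (hσz0 : ∀ u, σz u ≠ 0)
    (s2 : ℝ → ℝ) (hs2 : ∀ t, s2 t = ∫ u in t..T₀, (σz u) ^ 2)
    (U : ℝ → ℝ → ℝ)
    (hU : ∀ z t : ℝ, 0 < z → t < T₀ →
      U z t = 1
          + z * stdNormalCDF
              ((Real.log z + s2 t / 2) / Real.sqrt (s2 t))
          - stdNormalCDF
              ((Real.log z + s2 t / 2) / Real.sqrt (s2 t) - Real.sqrt (s2 t))) :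
    ∀ z t : ℝ, 0 < z → t < T₀ →
      deriv (fun τ => U z τ) t
          + (1 / 2) * (σz t) ^ 2 * z ^ 2 * deriv (deriv (fun w => U w t)) z = 0 := by
  intro z t hz ht
  have hσz2 : Continuous fun u ↦ σz u ^ 2 := hσz.pow 2
  have s2_pos : 0 < s2 t := hs2 t ▸ intervalIntegral.intervalIntegral_pos_of_pos
    (hσz2.intervalIntegrable t T₀) (fun u ↦ sq_pos_of_ne_zero (hσz0 u)) ht
  have s2_deriv : HasDerivAt s2 (-σz t ^ 2) t :=
    funext hs2 ▸ hasDerivAt_integral_left_of_continuous hσz2 t T₀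
  refine time_dependent_vol_solution_general s2_deriv s2_pos hz ?_
  filter_upwards [prod_mem_nhds (Ioi_mem_nhds hz) (Iio_mem_nhds ht)] with p hp
  rw [hU p.1 p.2 hp.1 hp.2, blackCall, ← add_sub_assoc]
  rfl
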